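/- Assume θ_1 < 1. For every π∈Δ(K×L), the value v_θ(π) satisfies the primal recursive formula: v_θ(π) = max_{σ∈Δ(I)^K} min_{τ∈Δ(J)^L} { θ_1·G^π_{στ} + (1−θ_1)·Σ_{(i,j): P^π_{στ}(i,j)>0} P^π_{στ}(i,j)·v_{θ^+}(π_{ij}) } = min_{τ∈Δ(J)^L} max_{σ∈Δ(I)^K} { θ_1·G^π_{στ} + (1−θ_1)·Σ_{(i,j): P^π_{στ}(i,j)>0} P^π_{στ}(i,j)·v_{θ^+}(π_{ij}) }. -/

import Mathlib

open scoped BigOperators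

noncomputable section RepeatedGames

/-- Probability of a finite history (list of action pairs, in chronological
order) under behavioral strategies `s`, `t` (which map the list of past action
pairs to a mixed action). -/
def probH {I J : Type*} (s : List (I × J) → I → ℝ) (t : List (I × J) → J → ℝ) :
    List (I × J) → ℝ
  | [] => 1
  | a :: h =>
      s [] a.1 * t [] a.2 *
        probH (fun h' => s (a :: h')) (fun h' => t (a :: h')) h

/-- Expected stage payoff at stage `m+1` (i.e. after `m` completed stages). -/
def stagePay {I J : Type*} [Fintype I] [Fintype J]
    (s : List (I × J) → I → ℝ) (t : List (I × J) → J → ℝ)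
    (g : I → J → ℝ) (m : ℕ) : ℝ :=
  ∑ h : Fin m → I × J,
    probH s t (List.ofFn h) *
      ∑ i, ∑ j, s (List.ofFn h) i * t (List.ofFn h) j * g i j

/-- Behavioral strategies of a player with type set `X` and action set `A`,
observing histories in `(I × J)^*`. -/
def Strat (I J X A : Type*) [Fintype A] : Type _ :=
  {f : X → List (I × J) → A → ℝ // ∀ x h, f x h ∈ stdSimplex ℝ A}

instance {I J X A : Type*} [Fintype A] [Nonempty A] :
    Nonempty (Strat I J X A) := by
  refine ⟨⟨fun _ _ _ => (Fintype.card A : ℝ)⁻¹, fun x h => ⟨fun a => by positivity, ?_⟩⟩⟩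
  have hA : (Fintype.card A : ℝ) ≠ 0 := by
    exact_mod_cast Fintype.card_ne_zero
  simp [Finset.sum_const, Finset.card_univ, nsmul_eq_mul, mul_inv_cancel₀ hA]

/-- The auxiliary `θ`-weighted payoff `γ_θ(π, ŝ, t̂; ζ)`. -/
def payA {I J K L : Type*} [Fintype I] [Fintype J] [Fintype K] [Fintype L]
    (θ : ℕ → ℝ) (G : K → L → I → J → ℝ) (π : K × L → ℝ) (ζ : K → ℝ)
    (s : Strat I J K I) (t : Strat I J L J) : ℝ :=
  ∑ k, ∑ l, π (k, l) * ζ k *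
    ∑' m : ℕ, θ m * stagePay (s.1 k) (t.1 l) (G k l) m

/-- The `θ`-weighted payoff `γ_θ(π, ŝ, t̂)`. -/
def pay {I J K L : Type*} [Fintype I] [Fintype J] [Fintype K] [Fintype L]
    (θ : ℕ → ℝ) (G : K → L → I → J → ℝ) (π : K × L → ℝ)
    (s : Strat I J K I) (t : Strat I J L J) : ℝ :=
  payA θ G π (fun _ => 1) s t

/-- Maxmin `v⁻_θ(π)` of the repeated game `𝒢_θ(π)`. -/
def vMinus {I J K L : Type*} [Fintype I] [Fintype J] [Fintype K] [Fintype L]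
    (θ : ℕ → ℝ) (G : K → L → I → J → ℝ) (π : K × L → ℝ) : ℝ :=
  ⨆ s : Strat I J K I, ⨅ t : Strat I J L J, pay θ G π s t

/-- Minmax `v⁺_θ(π)` of the repeated game `𝒢_θ(π)`. -/
def vPlus {I J K L : Type*} [Fintype I] [Fintype J] [Fintype K] [Fintype L]
    (θ : ℕ → ℝ) (G : K → L → I → J → ℝ) (π : K × L → ℝ) : ℝ :=
  ⨅ t : Strat I J L J, ⨆ s : Strat I J K I, pay θ G π s t

/-- Dual payoff `h_θ[x,Q;ζ](p,ŝ,t̂) = γ_θ(p⊗Q, ŝ, t̂; ζ) − ⟨p,x⟩`. -/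
def hDual {I J K L : Type*} [Fintype I] [Fintype J] [Fintype K] [Fintype L]
    (θ : ℕ → ℝ) (G : K → L → I → J → ℝ) (x : K → ℝ) (Q : K → L → ℝ)
    (ζ : K → ℝ) (p : K → ℝ) (s : Strat I J K I) (t : Strat I J L J) : ℝ :=
  payA θ G (fun kl => p kl.1 * Q kl.1 kl.2) ζ s t - ∑ k, p k * x k

/-- Maxmin `w⁻_θ(x,Q;ζ)` of the dual game `𝒟[𝒢_θ](x,Q;ζ)`. -/
def wMinus {I J K L : Type*} [Fintype I] [Fintype J] [Fintype K] [Fintype L]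
    (θ : ℕ → ℝ) (G : K → L → I → J → ℝ) (x : K → ℝ) (Q : K → L → ℝ)
    (ζ : K → ℝ) : ℝ :=
  ⨆ ps : stdSimplex ℝ K × Strat I J K I, ⨅ t : Strat I J L J,
    hDual θ G x Q ζ (ps.1 : K → ℝ) ps.2 t

/-- Minmax `w⁺_θ(x,Q;ζ)` of the dual game `𝒟[𝒢_θ](x,Q;ζ)`. -/
def wPlus {I J K L : Type*} [Fintype I] [Fintype J] [Fintype K] [Fintype L]
    (θ : ℕ → ℝ) (G : K → L → I → J → ℝ) (x : K → ℝ) (Q : K → L → ℝ)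
    (ζ : K → ℝ) : ℝ :=
  ⨅ t : Strat I J L J, ⨆ ps : stdSimplex ℝ K × Strat I J K I,
    hDual θ G x Q ζ (ps.1 : K → ℝ) ps.2 t

end RepeatedGames

/-- One-stage (first-stage) behavioral strategies. -/
def OneStage (X A : Type*) [Fintype A] : Type _ :=
  {σ : X → A → ℝ // ∀ x, σ x ∈ stdSimplex ℝ A}

instance {X A : Type*} [Fintype A] [Nonempty A] : Nonempty (OneStage X A) := by
  refine ⟨⟨fun _ _ => (Fintype.card A : ℝ)⁻¹, fun x => ⟨fun a => by positivity, ?_⟩⟩⟩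
  have hA : (Fintype.card A : ℝ) ≠ 0 := by exact_mod_cast Fintype.card_ne_zero
  simp [Finset.sum_const, Finset.card_univ, nsmul_eq_mul, mul_inv_cancel₀ hA]

noncomputable section Helpers

theorem saddle_value {A B : Type*} (f : A → B → ℝ) (M : ℝ)
    (hM : ∀ a b, |f a b| ≤ M) (a : A) (b : B) (v : ℝ)
    (h1 : ∀ a', f a' b ≤ v) (h2 : ∀ b', v ≤ f a b') :
    (⨆ a, ⨅ b, f a b) = v ∧ (⨅ b, ⨆ a, f a b) = v := by
  haveI : Nonempty A := ⟨a⟩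
  haveI : Nonempty B := ⟨b⟩
  have lo : ∀ a b, -M ≤ f a b := fun a b => (abs_le.1 (hM a b)).1
  have hi : ∀ a b, f a b ≤ M := fun a b => (abs_le.1 (hM a b)).2
  have bb : ∀ a, BddBelow (Set.range fun b => f a b) := fun a => ⟨-M, by rintro _ ⟨b, rfl⟩; exact lo a b⟩
  have ba : ∀ b, BddAbove (Set.range fun a => f a b) := fun b => ⟨M, by rintro _ ⟨a, rfl⟩; exact hi a b⟩
  have i1 : ∀ a, (⨅ b, f a b) ≤ v := fun a' => (ciInf_le (bb a') b).trans (h1 a')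
  have i2 : ∀ b, v ≤ ⨆ a, f a b := fun b' => (h2 b').trans (le_ciSup (ba b') a)
  constructor
  · apply le_antisymm (ciSup_le i1)
    exact (le_ciInf h2).trans (le_ciSup (f := fun a => ⨅ b, f a b) ⟨v, by rintro _ ⟨a, rfl⟩; exact i1 a⟩ a)
  · apply le_antisymm _ (le_ciInf i2)
    exact (ciInf_le (f := fun b => ⨆ a, f a b) ⟨v, by rintro _ ⟨b, rfl⟩; exact i2 b⟩ b).trans (ciSup_le h1)

section rec
variable {I J : Type*} [Fintype I] [Fintype J]

theorem stagePay_zero (s : List (I × J) → I → ℝ) (t : List (I × J) → J → ℝ) (g : I → J → ℝ) :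
    stagePay s t g 0 = ∑ i, ∑ j, s [] i * t [] j * g i j := by
  simp [stagePay, probH]

theorem stagePay_succ (s : List (I × J) → I → ℝ) (t : List (I × J) → J → ℝ) (g : I → J → ℝ)
    (m : ℕ) :
    stagePay s t g (m + 1) = ∑ i, ∑ j, s [] i * t [] j *
      stagePay (fun h => s ((i, j) :: h)) (fun h => t ((i, j) :: h)) g m := by
  unfold stagePay
  rw [← (Fin.consEquiv (fun _ : Fin (m+1) => I × J)).sum_comp]
  rw [Fintype.sum_prod_type, Fintype.sum_prod_type]
  refine Finset.sum_congr rfl fun i _ => Finset.sum_congr rfl fun j _ => ?_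
  rw [Finset.mul_sum]
  refine Finset.sum_congr rfl fun h _ => ?_
  simp [Fin.consEquiv, List.ofFn_succ, probH, mul_assoc]

theorem stage_avg (σ : I → ℝ) (τ : J → ℝ) (hσ : σ ∈ stdSimplex ℝ I) (hτ : τ ∈ stdSimplex ℝ J)
    (f : I → J → ℝ) (C : ℝ) (hf : ∀ i j, |f i j| ≤ C) :
    |∑ i, ∑ j, σ i * τ j * f i j| ≤ C := by
  calc _ ≤ ∑ i, ∑ j, σ i * τ j * C := by
        refine (Finset.abs_sum_le_sum_abs _ _).trans (Finset.sum_le_sum fun i _ => ?_)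
        refine (Finset.abs_sum_le_sum_abs _ _).trans (Finset.sum_le_sum fun j _ => ?_)
        have := mul_nonneg (hσ.1 i) (hτ.1 j)
        rw [abs_mul, abs_of_nonneg this]
        exact mul_le_mul_of_nonneg_left (hf i j) this
    _ = C := by
        simp_rw [← Finset.sum_mul, ← Finset.mul_sum, hτ.2, mul_one, hσ.2, one_mul]

theorem stagePay_bound (g : I → J → ℝ) (C : ℝ) (hg : ∀ i j, |g i j| ≤ C) (m : ℕ) :
    ∀ (s : List (I × J) → I → ℝ) (t : List (I × J) → J → ℝ)
    (_ : ∀ h, s h ∈ stdSimplex ℝ I) (_ : ∀ h, t h ∈ stdSimplex ℝ J),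
    |stagePay s t g m| ≤ C := by
  induction m with
  | zero => intro s t hs ht; rw [stagePay_zero]; exact stage_avg _ _ (hs _) (ht _) _ _ hg
  | succ m ih =>
    intro s t hs ht
    rw [stagePay_succ]
    exact stage_avg _ _ (hs _) (ht _) _ _ fun i j => ih _ _ (fun h => hs _) (fun h => ht _)

end rec

section plan
variable {I J : Type*} {A : Type*}

/-- realization weight -/
def rw1 (pr : I × J → A) (s : List (I × J) → A → ℝ) : List (I × J) → ℝ
  | [] => 1
  | c :: h => s [] (pr c) * rw1 pr (fun h' => s (c :: h')) h

theorem rw1_snoc (pr : I × J → A) (h : List (I × J)) (c : I × J) :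
    ∀ s : List (I × J) → A → ℝ, rw1 pr s (h ++ [c]) = rw1 pr s h * s h (pr c) := by
  induction h with
  | nil => intro s; simp [rw1]
  | cons a h ih => intro s; simp [rw1, ih, mul_assoc]

theorem probH_eq (h : List (I × J)) : ∀ (s : List (I × J) → I → ℝ) (t : List (I × J) → J → ℝ),
    probH s t h = rw1 Prod.fst s h * rw1 Prod.snd t h := by
  induction h with
  | nil => intro s t; simp [rw1, probH]
  | cons a h ih => intro s t; simp only [rw1, probH, ih]; ring

/-- realization plans -/
def Plan (pr : I × J → A) (X : Type*) [Fintype A] : Set (X → List (I × J) → A → ℝ) :=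
  {z | (∀ x h a, 0 ≤ z x h a) ∧ (∀ x, ∑ a, z x [] a = 1) ∧
    ∀ x h c, ∑ a, z x (h ++ [c]) a = z x h (pr c)}

variable [Fintype A] {X : Type*}

def toPlan (pr : I × J → A) (s : Strat I J X A) : X → List (I × J) → A → ℝ :=
  fun x h a => rw1 pr (s.1 x) h * s.1 x h a

theorem rw1_nonneg (pr : I × J → A) (h : List (I × J)) :
    ∀ s : List (I × J) → A → ℝ, (∀ h a, 0 ≤ s h a) → 0 ≤ rw1 pr s h := by
  induction h with
  | nil => intro s _; simp [rw1]
  | cons a h ih => intro s hs; exact mul_nonneg (hs _ _) (ih _ fun _ _ => hs _ _)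

theorem toPlan_mem (pr : I × J → A) (s : Strat I J X A) : toPlan pr s ∈ Plan pr X := by
  refine ⟨fun x h a => mul_nonneg (rw1_nonneg _ _ _ fun h a => (s.2 x h).1 a) ((s.2 x h).1 a),
    fun x => ?_, fun x h c => ?_⟩
  · simp [toPlan, rw1, (s.2 x []).2]
  · simp only [toPlan]
    rw [← Finset.mul_sum, (s.2 x _).2, rw1_snoc, mul_one]

theorem exists_strat [Nonempty A] (pr : I × J → A) (z : X → List (I × J) → A → ℝ)
    (hz : z ∈ Plan pr X) : ∃ s : Strat I J X A, toPlan pr s = z := by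
  classical
  obtain ⟨h0, h1, h2⟩ := hz
  obtain ⟨u⟩ : Nonempty (Strat I J X A) := inferInstance
  let f : X → List (I × J) → A → ℝ := fun x h a =>
    if ∑ b, z x h b = 0 then u.1 x h a else z x h a / ∑ b, z x h b
  have hf : ∀ x h, f x h ∈ stdSimplex ℝ A := by
    intro x h
    by_cases hD : ∑ b, z x h b = 0
    · have : f x h = u.1 x h := by funext a; simp [f, hD]
      rw [this]; exact u.2 x h
    · have : f x h = fun a => z x h a / ∑ b, z x h b := by funext a; simp [f, hD]
      rw [this]
      refine ⟨fun a => div_nonneg (h0 _ _ _) (Finset.sum_nonneg fun _ _ => h0 _ _ _), ?_⟩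
      rw [← Finset.sum_div, div_self hD]
  have key : ∀ x h a, (∑ b, z x h b) * f x h a = z x h a := by
    intro x h a
    by_cases hD : ∑ b, z x h b = 0
    · rw [hD, zero_mul]
      exact ((Finset.sum_eq_zero_iff_of_nonneg fun _ _ => h0 _ _ _).1 hD a (Finset.mem_univ _)).symm
    · simp only [f, hD, if_false]; field_simp
  have hr : ∀ x h, rw1 pr (f x) h = ∑ b, z x h b := by
    intro x h
    induction h using List.reverseRecOn with
    | nil => simp [rw1, h1]
    | append_singleton h c ih => rw [rw1_snoc, ih, key, h2]
  refine ⟨⟨f, hf⟩, ?_⟩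
  funext x h a
  simp only [toPlan]
  rw [hr, key]

theorem plan_le_one (pr : I × J → A) (z : X → List (I × J) → A → ℝ)
    (hz : z ∈ Plan pr X) (x : X) (h : List (I × J)) : ∀ a, z x h a ≤ 1 := by
  obtain ⟨h0, h1, h2⟩ := hz
  have : ∑ a, z x h a ≤ 1 := by
    induction h using List.reverseRecOn with
    | nil => rw [h1]
    | append_singleton h c ih =>
      rw [h2]
      exact (Finset.single_le_sum (fun a _ => h0 x h a) (Finset.mem_univ _)).trans ih
  intro a
  exact (Finset.single_le_sum (fun a _ => h0 x h a) (Finset.mem_univ _)).trans this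

theorem plan_compact (pr : I × J → A) : IsCompact (Plan pr X) := by
  have hc : IsCompact (Set.univ.pi fun _ : X => Set.univ.pi fun _ : List (I × J) =>
      Set.univ.pi fun _ : A => Set.Icc (0 : ℝ) 1) :=
    isCompact_univ_pi fun _ => isCompact_univ_pi fun _ => isCompact_univ_pi fun _ => isCompact_Icc
  refine hc.of_isClosed_subset ?_ ?_
  · have : Plan pr X = (⋂ x, ⋂ h, ⋂ a, {z : X → List (I × J) → A → ℝ | 0 ≤ z x h a}) ∩
        ((⋂ x, {z | ∑ a, z x [] a = 1}) ∩
        (⋂ x, ⋂ h, ⋂ c, {z | ∑ a, z x (h ++ [c]) a = z x h (pr c)})) := by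
      ext z; simp [Plan]
    rw [this]
    refine IsClosed.inter ?_ (IsClosed.inter ?_ ?_)
    · refine isClosed_iInter fun x => isClosed_iInter fun h => isClosed_iInter fun a => ?_
      exact isClosed_le (by fun_prop) (by fun_prop)
    · refine isClosed_iInter fun x => ?_
      exact isClosed_eq (by fun_prop) (by fun_prop)
    · refine isClosed_iInter fun x => isClosed_iInter fun h => isClosed_iInter fun a => ?_
      exact isClosed_eq (by fun_prop) (by fun_prop)
  · intro z hz x _ h _ a _
    exact ⟨hz.1 x h a, plan_le_one pr z hz x h a⟩

theorem plan_convex (pr : I × J → A) : Convex ℝ (Plan pr X) := by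
  rintro z ⟨h0, h1, h2⟩ w ⟨k0, k1, k2⟩ a b ha hb hab
  refine ⟨fun x h c => ?_, fun x => ?_, fun x h c => ?_⟩
  · exact add_nonneg (mul_nonneg ha (h0 _ _ _)) (mul_nonneg hb (k0 _ _ _))
  · simp [Finset.sum_add_distrib, ← Finset.mul_sum, h1, k1, hab]
  · simp [Finset.sum_add_distrib, ← Finset.mul_sum, h2, k2]

end plan

section minimax
variable {I J K L : Type*} [Fintype I] [Fintype J] [Fintype K] [Fintype L]

/-- bilinear stage payoff -/
def bst (g : I → J → ℝ) (m : ℕ) (z : List (I × J) → I → ℝ) (w : List (I × J) → J → ℝ) : ℝ :=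
  ∑ h : Fin m → I × J, ∑ i, ∑ j, z (List.ofFn h) i * w (List.ofFn h) j * g i j

def bpay (θ : ℕ → ℝ) (G : K → L → I → J → ℝ) (π : K × L → ℝ)
    (z : K → List (I × J) → I → ℝ) (w : L → List (I × J) → J → ℝ) : ℝ :=
  ∑ k, ∑ l, π (k, l) * ∑' m : ℕ, θ m * bst (G k l) m (z k) (w l)

theorem stagePay_eq_bst (g : I → J → ℝ) (m : ℕ) (s : Strat I J K I) (t : Strat I J L J)
    (k : K) (l : L) :
    stagePay (s.1 k) (t.1 l) g m = bst g m (toPlan Prod.fst s k) (toPlan Prod.snd t l) := by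
  unfold stagePay bst toPlan
  refine Finset.sum_congr rfl fun h _ => ?_
  rw [probH_eq, Finset.mul_sum]
  refine Finset.sum_congr rfl fun i _ => ?_
  rw [Finset.mul_sum]
  refine Finset.sum_congr rfl fun j _ => ?_
  ring

theorem pay_eq_bpay (θ : ℕ → ℝ) (G : K → L → I → J → ℝ) (π : K × L → ℝ)
    (s : Strat I J K I) (t : Strat I J L J) :
    pay θ G π s t = bpay θ G π (toPlan Prod.fst s) (toPlan Prod.snd t) := by
  simp only [pay, payA, bpay, mul_one, stagePay_eq_bst]

def Cst (G : K → L → I → J → ℝ) : ℝ := ∑ k, ∑ l, ∑ i, ∑ j, |G k l i j|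

theorem le_Cst (G : K → L → I → J → ℝ) (k l i j) : |G k l i j| ≤ Cst G := by
  unfold Cst
  have e1 : |G k l i j| ≤ ∑ j, |G k l i j| :=
    Finset.single_le_sum (f := fun j => |G k l i j|) (fun _ _ => by positivity) (Finset.mem_univ j)
  have e2 : _ ≤ ∑ i, ∑ j, |G k l i j| :=
    Finset.single_le_sum (f := fun i => ∑ j, |G k l i j|) (fun _ _ => by positivity) (Finset.mem_univ i)
  have e3 : _ ≤ ∑ l, ∑ i, ∑ j, |G k l i j| :=
    Finset.single_le_sum (f := fun l => ∑ i, ∑ j, |G k l i j|) (fun _ _ => by positivity) (Finset.mem_univ l)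
  have e4 : _ ≤ ∑ k, ∑ l, ∑ i, ∑ j, |G k l i j| :=
    Finset.single_le_sum (f := fun k => ∑ l, ∑ i, ∑ j, |G k l i j|) (fun _ _ => by positivity) (Finset.mem_univ k)
  linarith

theorem stage_le (G : K → L → I → J → ℝ) (s : Strat I J K I) (t : Strat I J L J) (k l m) :
    |stagePay (s.1 k) (t.1 l) (G k l) m| ≤ Cst G :=
  stagePay_bound _ _ (le_Cst G k l) m _ _ (s.2 k) (t.2 l)

theorem term_le (θ : ℕ → ℝ) (h0 : ∀ m, 0 ≤ θ m) (G : K → L → I → J → ℝ)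
    (s : Strat I J K I) (t : Strat I J L J) (k l m) :
    ‖θ m * stagePay (s.1 k) (t.1 l) (G k l) m‖ ≤ θ m * Cst G := by
  rw [Real.norm_eq_abs, abs_mul, abs_of_nonneg (h0 m)]
  exact mul_le_mul_of_nonneg_left (stage_le G s t k l m) (h0 m)

theorem term_summable (θ : ℕ → ℝ) (h0 : ∀ m, 0 ≤ θ m) (hs : Summable θ) (G : K → L → I → J → ℝ)
    (s : Strat I J K I) (t : Strat I J L J) (k l) :
    Summable fun m => θ m * stagePay (s.1 k) (t.1 l) (G k l) m :=
  Summable.of_norm_bounded (hs.mul_right (Cst G)) (term_le θ h0 G s t k l)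

theorem pay_bound (θ : ℕ → ℝ) (h0 : ∀ m, 0 ≤ θ m) (hs : Summable θ) (G : K → L → I → J → ℝ)
    (π : K × L → ℝ) (s : Strat I J K I) (t : Strat I J L J) :
    |pay θ G π s t| ≤ ∑ k, ∑ l, |π (k, l)| * ∑' m, θ m * Cst G := by
  unfold pay payA
  refine (Finset.abs_sum_le_sum_abs _ _).trans (Finset.sum_le_sum fun k _ => ?_)
  refine (Finset.abs_sum_le_sum_abs _ _).trans (Finset.sum_le_sum fun l _ => ?_)
  rw [mul_one, abs_mul]
  refine mul_le_mul_of_nonneg_left ?_ (abs_nonneg _)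
  exact tsum_of_norm_bounded (hs.mul_right (Cst G)).hasSum (term_le θ h0 G s t k l)

variable [Nonempty I] [Nonempty J]

theorem bterm_le (θ : ℕ → ℝ) (h0 : ∀ m, 0 ≤ θ m) (G : K → L → I → J → ℝ)
    (z) (hz : z ∈ Plan (Prod.fst : I × J → I) K) (w) (hw : w ∈ Plan (Prod.snd : I × J → J) L)
    (k l m) :
    ‖θ m * bst (G k l) m (z k) (w l)‖ ≤ θ m * Cst G := by
  obtain ⟨s, rfl⟩ := exists_strat _ z hz
  obtain ⟨t, rfl⟩ := exists_strat _ w hw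
  rw [← stagePay_eq_bst]
  exact term_le θ h0 G s t k l m

theorem bterm_summable (θ : ℕ → ℝ) (h0 : ∀ m, 0 ≤ θ m) (hs : Summable θ) (G : K → L → I → J → ℝ)
    (z) (hz : z ∈ Plan (Prod.fst : I × J → I) K) (w) (hw : w ∈ Plan (Prod.snd : I × J → J) L)
    (k l) :
    Summable fun m => θ m * bst (G k l) m (z k) (w l) :=
  Summable.of_norm_bounded (hs.mul_right (Cst G)) (bterm_le θ h0 G z hz w hw k l)

theorem bst_lin_left (g : I → J → ℝ) (m : ℕ) (z z' : List (I × J) → I → ℝ)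
    (w : List (I × J) → J → ℝ) (a b : ℝ) :
    bst g m (a • z + b • z') w = a * bst g m z w + b * bst g m z' w := by
  simp only [bst, Finset.mul_sum, ← Finset.sum_add_distrib]
  refine Finset.sum_congr rfl fun h _ => Finset.sum_congr rfl fun i _ =>
    Finset.sum_congr rfl fun j _ => ?_
  simp; ring

theorem bst_lin_right (g : I → J → ℝ) (m : ℕ) (z : List (I × J) → I → ℝ)
    (w w' : List (I × J) → J → ℝ) (a b : ℝ) :
    bst g m z (a • w + b • w') = a * bst g m z w + b * bst g m z w' := by
  simp only [bst, Finset.mul_sum, ← Finset.sum_add_distrib]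
  refine Finset.sum_congr rfl fun h _ => Finset.sum_congr rfl fun i _ =>
    Finset.sum_congr rfl fun j _ => ?_
  simp; ring

theorem bpay_lin_left (θ : ℕ → ℝ) (h0 : ∀ m, 0 ≤ θ m) (hs : Summable θ) (G : K → L → I → J → ℝ)
    (π : K × L → ℝ)
    (z) (hz : z ∈ Plan (Prod.fst : I × J → I) K) (z') (hz' : z' ∈ Plan (Prod.fst : I × J → I) K)
    (w) (hw : w ∈ Plan (Prod.snd : I × J → J) L) (a b : ℝ) :
    bpay θ G π (a • z + b • z') w = a * bpay θ G π z w + b * bpay θ G π z' w := by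
  simp only [bpay, Finset.mul_sum, ← Finset.sum_add_distrib]
  refine Finset.sum_congr rfl fun k _ => Finset.sum_congr rfl fun l _ => ?_
  have e : ∀ m, θ m * bst (G k l) m ((a • z + b • z') k) (w l) =
      a * (θ m * bst (G k l) m (z k) (w l)) + b * (θ m * bst (G k l) m (z' k) (w l)) := by
    intro m
    have := bst_lin_left (G k l) m (z k) (z' k) (w l) a b
    simp only [Pi.add_apply, Pi.smul_apply] at this ⊢
    rw [this]; ring
  simp_rw [e]
  rw [Summable.tsum_add ((bterm_summable θ h0 hs G z hz w hw k l).mul_left a)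
    ((bterm_summable θ h0 hs G z' hz' w hw k l).mul_left b), tsum_mul_left, tsum_mul_left]
  ring

theorem bpay_lin_right (θ : ℕ → ℝ) (h0 : ∀ m, 0 ≤ θ m) (hs : Summable θ) (G : K → L → I → J → ℝ)
    (π : K × L → ℝ)
    (z) (hz : z ∈ Plan (Prod.fst : I × J → I) K)
    (w) (hw : w ∈ Plan (Prod.snd : I × J → J) L) (w') (hw' : w' ∈ Plan (Prod.snd : I × J → J) L)
    (a b : ℝ) :
    bpay θ G π z (a • w + b • w') = a * bpay θ G π z w + b * bpay θ G π z w' := by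
  simp only [bpay, Finset.mul_sum, ← Finset.sum_add_distrib]
  refine Finset.sum_congr rfl fun k _ => Finset.sum_congr rfl fun l _ => ?_
  have e : ∀ m, θ m * bst (G k l) m (z k) ((a • w + b • w') l) =
      a * (θ m * bst (G k l) m (z k) (w l)) + b * (θ m * bst (G k l) m (z k) (w' l)) := by
    intro m
    have := bst_lin_right (G k l) m (z k) (w l) (w' l) a b
    simp only [Pi.add_apply, Pi.smul_apply] at this ⊢
    rw [this]; ring
  simp_rw [e]
  rw [Summable.tsum_add ((bterm_summable θ h0 hs G z hz w hw k l).mul_left a)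
    ((bterm_summable θ h0 hs G z hz w' hw' k l).mul_left b), tsum_mul_left, tsum_mul_left]
  ring

theorem exists_saddle (θ : ℕ → ℝ) (h0 : ∀ m, 0 ≤ θ m) (hs : Summable θ) (G : K → L → I → J → ℝ)
    (π : K × L → ℝ) :
    ∃ (s : Strat I J K I) (t : Strat I J L J), ∀ s' t', pay θ G π s' t ≤ pay θ G π s t' := by
  obtain ⟨u⟩ : Nonempty (Strat I J K I) := inferInstance
  obtain ⟨v⟩ : Nonempty (Strat I J L J) := inferInstance
  have := Sion.exists_isSaddlePointOn (X := Plan (Prod.snd : I × J → J) L)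
    (Y := Plan (Prod.fst : I × J → I) K) (f := fun w z => bpay θ G π z w)
    ⟨_, toPlan_mem _ v⟩ (plan_convex _) (plan_compact _) ?_ ?_ (plan_convex _)
    ⟨_, toPlan_mem _ u⟩ (plan_compact _) ?_ ?_
  · obtain ⟨w, hw, z, hz, h⟩ := this
    obtain ⟨s, rfl⟩ := exists_strat _ z hz
    obtain ⟨t, rfl⟩ := exists_strat _ w hw
    refine ⟨s, t, fun s' t' => ?_⟩
    rw [pay_eq_bpay, pay_eq_bpay]
    exact h _ (toPlan_mem _ _) _ (toPlan_mem _ _)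
  · intro z hz
    apply ContinuousOn.lowerSemicontinuousOn
    unfold bpay
    refine continuousOn_finsetSum _ fun k _ => continuousOn_finsetSum _ fun l _ =>
      continuousOn_const.mul ?_
    refine continuousOn_tsum (u := fun m => θ m * Cst G) (fun m => ?_) (hs.mul_right _) ?_
    · unfold bst; fun_prop
    · intro m w hw; exact bterm_le θ h0 G z hz w hw k l m
  · intro z hz
    apply ConvexOn.quasiconvexOn
    refine ⟨plan_convex _, fun w hw w' hw' a b _ _ _ => ?_⟩
    exact (bpay_lin_right θ h0 hs G π z hz w hw w' hw' a b).le
  · intro w hw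
    apply ContinuousOn.upperSemicontinuousOn
    unfold bpay
    refine continuousOn_finsetSum _ fun k _ => continuousOn_finsetSum _ fun l _ =>
      continuousOn_const.mul ?_
    refine continuousOn_tsum (u := fun m => θ m * Cst G) (fun m => ?_) (hs.mul_right _) ?_
    · unfold bst; fun_prop
    · intro m z hz; exact bterm_le θ h0 G z hz w hw k l m
  · intro w hw
    apply ConcaveOn.quasiconcaveOn
    refine ⟨plan_convex _, fun z hz z' hz' a b _ _ _ => ?_⟩
    exact (bpay_lin_left θ h0 hs G π z hz z' hz' w hw a b).ge

theorem exists_opt (θ : ℕ → ℝ) (h0 : ∀ m, 0 ≤ θ m) (hs : Summable θ) (G : K → L → I → J → ℝ)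
    (π : K × L → ℝ) :
    ∃ (s : Strat I J K I) (t : Strat I J L J), (∀ s', pay θ G π s' t ≤ vPlus θ G π) ∧
      (∀ t', vPlus θ G π ≤ pay θ G π s t') := by
  obtain ⟨s, t, h⟩ := exists_saddle θ h0 hs G π
  have := (saddle_value (fun s t => pay θ G π s t) _ (pay_bound θ h0 hs G π) s t (pay θ G π s t)
    (fun s' => h s' t) (fun t' => h s t')).2
  have hv : vPlus θ G π = pay θ G π s t := this
  rw [hv]
  exact ⟨s, t, fun s' => h s' t, fun t' => h s t'⟩

end minimax

section dp
variable {I J K L : Type*} [Fintype I] [Fintype J] [Fintype K] [Fintype L]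

def headS {X A : Type*} [Fintype A] (s : Strat I J X A) : OneStage X A :=
  ⟨fun x => s.1 x [], fun x => s.2 x []⟩

def tailS {X A : Type*} [Fintype A] (s : Strat I J X A) (c : I × J) : Strat I J X A :=
  ⟨fun x h => s.1 x (c :: h), fun x h => s.2 x (c :: h)⟩

def consS {X A : Type*} [Fintype A] (σ : OneStage X A) (s : I → J → Strat I J X A) :
    Strat I J X A :=
  ⟨fun x h => match h with
    | [] => σ.1 x
    | c :: h' => (s c.1 c.2).1 x h', fun x h => by
      cases h with
      | nil => exact σ.2 x
      | cons c h' => exact (s c.1 c.2).2 x h'⟩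

theorem head_cons {X A : Type*} [Fintype A] (σ : OneStage X A) (s : I → J → Strat I J X A) :
    headS (consS σ s) = σ := rfl

theorem tail_cons {X A : Type*} [Fintype A] (σ : OneStage X A) (s : I → J → Strat I J X A) (i j) :
    tailS (consS σ s) (i, j) = s i j := rfl

/-- unnormalised posterior -/
def mu (π : K × L → ℝ) (σ : OneStage K I) (τ : OneStage L J) (i : I) (j : J) : K × L → ℝ :=
  fun kl => π kl * σ.1 kl.1 i * τ.1 kl.2 j

theorem tsum_rec (θ : ℕ → ℝ) (h0 : ∀ m, 0 ≤ θ m) (hs : Summable θ) (θ' : ℕ → ℝ) (c : ℝ)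
    (hθ' : ∀ m, θ (m + 1) = c * θ' m) (h0' : ∀ m, 0 ≤ θ' m) (hs' : Summable θ')
    (G : K → L → I → J → ℝ) (s : Strat I J K I) (t : Strat I J L J) (k l) :
    ∑' m, θ m * stagePay (s.1 k) (t.1 l) (G k l) m =
      θ 0 * ∑ i, ∑ j, s.1 k [] i * t.1 l [] j * G k l i j +
      c * ∑ i, ∑ j, s.1 k [] i * t.1 l [] j *
        ∑' m, θ' m * stagePay ((tailS s (i, j)).1 k) ((tailS t (i, j)).1 l) (G k l) m := by
  rw [(term_summable θ h0 hs G s t k l).tsum_eq_zero_add, stagePay_zero]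
  congr 1
  simp_rw [← tsum_mul_left]
  have hsum : ∀ i j, Summable fun m => s.1 k [] i * t.1 l [] j *
      (θ' m * stagePay ((tailS s (i, j)).1 k) ((tailS t (i, j)).1 l) (G k l) m) :=
    fun i j => (term_summable θ' h0' hs' G (tailS s (i, j)) (tailS t (i, j)) k l).mul_left _
  have e : ∑ i, ∑ j, ∑' m, s.1 k [] i * t.1 l [] j *
      (θ' m * stagePay ((tailS s (i, j)).1 k) ((tailS t (i, j)).1 l) (G k l) m) =
      ∑' m, ∑ i, ∑ j, s.1 k [] i * t.1 l [] j *
      (θ' m * stagePay ((tailS s (i, j)).1 k) ((tailS t (i, j)).1 l) (G k l) m) := by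
    rw [Summable.tsum_finsetSum fun i _ => summable_sum fun j _ => hsum i j]
    refine Finset.sum_congr rfl fun i _ => ?_
    rw [Summable.tsum_finsetSum fun j _ => hsum i j]
  rw [e, ← tsum_mul_left]
  refine tsum_congr fun m => ?_
  rw [stagePay_succ, hθ']
  simp only [Finset.mul_sum]
  refine Finset.sum_congr rfl fun i _ => Finset.sum_congr rfl fun j _ => ?_
  simp only [tailS]
  ring

theorem sum4_comm (f : I → J → K → L → ℝ) :
    ∑ i, ∑ j, ∑ k, ∑ l, f i j k l = ∑ k, ∑ l, ∑ i, ∑ j, f i j k l := by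
  calc _ = ∑ i, ∑ k, ∑ j, ∑ l, f i j k l := Finset.sum_congr rfl fun i _ => Finset.sum_comm
    _ = ∑ k, ∑ i, ∑ j, ∑ l, f i j k l := Finset.sum_comm
    _ = ∑ k, ∑ i, ∑ l, ∑ j, f i j k l :=
        Finset.sum_congr rfl fun k _ => Finset.sum_congr rfl fun i _ => Finset.sum_comm
    _ = _ := Finset.sum_congr rfl fun k _ => Finset.sum_comm

theorem pay_rec (θ : ℕ → ℝ) (h0 : ∀ m, 0 ≤ θ m) (hs : Summable θ) (θ' : ℕ → ℝ) (c : ℝ)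
    (hθ' : ∀ m, θ (m + 1) = c * θ' m) (h0' : ∀ m, 0 ≤ θ' m) (hs' : Summable θ')
    (G : K → L → I → J → ℝ) (π : K × L → ℝ) (s : Strat I J K I) (t : Strat I J L J) :
    pay θ G π s t =
      θ 0 * (∑ k, ∑ l, ∑ i, ∑ j, π (k, l) * (headS s).1 k i * (headS t).1 l j * G k l i j) +
      c * ∑ i, ∑ j, pay θ' G (mu π (headS s) (headS t) i j) (tailS s (i, j)) (tailS t (i, j)) := by
  have comm : ∑ i, ∑ j, pay θ' G (mu π (headS s) (headS t) i j) (tailS s (i, j)) (tailS t (i, j)) =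
      ∑ k, ∑ l, ∑ i, ∑ j, mu π (headS s) (headS t) i j (k, l) *
        ∑' m, θ' m * stagePay ((tailS s (i, j)).1 k) ((tailS t (i, j)).1 l) (G k l) m := by
    simp only [pay, payA, mul_one]
    exact sum4_comm _
  rw [comm]
  simp only [pay, payA, mul_one, Finset.mul_sum, ← Finset.sum_add_distrib]
  refine Finset.sum_congr rfl fun k _ => Finset.sum_congr rfl fun l _ => ?_
  rw [tsum_rec θ h0 hs θ' c hθ' h0' hs' G s t k l]
  simp only [Finset.mul_sum, ← Finset.sum_add_distrib]
  refine Finset.sum_congr rfl fun i _ => Finset.sum_congr rfl fun j _ => ?_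
  simp only [mu, headS]
  ring

theorem vPlus_smul (θ : ℕ → ℝ) (G : K → L → I → J → ℝ) (μ : K × L → ℝ) (c : ℝ) (hc : 0 ≤ c) :
    vPlus θ G (fun kl => c * μ kl) = c * vPlus θ G μ := by
  unfold vPlus
  rw [Real.mul_iInf_of_nonneg hc]
  refine iInf_congr fun t => ?_
  rw [Real.mul_iSup_of_nonneg hc]
  refine iSup_congr fun s => ?_
  simp only [pay, payA, mul_one, Finset.mul_sum, mul_assoc]

end dp

end Helpers

/-- the primal recursive formula (Mertens–Zamir): the value
`v_θ(π)` (the common value of maxmin and minmax, here the minmax `vPlus`) is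
the sup-inf and the inf-sup, over first-stage strategies `σ ∈ Δ(I)^K` and
`τ ∈ Δ(J)^L`, of
`θ_1 G^π_{στ} + (1−θ_1) Σ_{(i,j) : P^π_{στ}(i,j)>0} P^π_{στ}(i,j) v_{θ⁺}(π_{ij})`.
Stages are indexed from `0`, so `θ 0 = θ_1`. -/
theorem stmt_10
    {K L I J : Type*} [Fintype K] [Fintype L] [Fintype I] [Fintype J]
    [Nonempty K] [Nonempty L] [Nonempty I] [Nonempty J]
    (G : K → L → I → J → ℝ)
    (θ : ℕ → ℝ) (hθ0 : ∀ m, 0 ≤ θ m) (hθ1 : HasSum θ 1) (hθlt : θ 0 < 1)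
    (θplus : ℕ → ℝ) (hθplus : ∀ m, θplus m = θ (m + 1) / (1 - θ 0))
    (π : K × L → ℝ) (hπ : π ∈ stdSimplex ℝ (K × L))
    (Pij : OneStage K I → OneStage L J → I → J → ℝ)
    (hPij : ∀ σ τ i j, Pij σ τ i j = ∑ k, ∑ l, π (k, l) * σ.1 k i * τ.1 l j)
    (πij : OneStage K I → OneStage L J → I → J → K × L → ℝ)
    (hπij : ∀ σ τ i j kl, πij σ τ i j kl =
      π kl * σ.1 kl.1 i * τ.1 kl.2 j / Pij σ τ i j)
    (Gexp : OneStage K I → OneStage L J → ℝ)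
    (hGexp : ∀ σ τ, Gexp σ τ =
      ∑ k, ∑ l, ∑ i, ∑ j, π (k, l) * σ.1 k i * τ.1 l j * G k l i j)
    (recval : OneStage K I → OneStage L J → ℝ)
    (hrecval : ∀ σ τ, recval σ τ =
      θ 0 * Gexp σ τ +
        (1 - θ 0) * ∑ i, ∑ j,
          if 0 < Pij σ τ i j then Pij σ τ i j * vPlus θplus G (πij σ τ i j)
          else 0) :
    vPlus θ G π = (⨆ σ : OneStage K I, ⨅ τ : OneStage L J, recval σ τ) ∧
    vPlus θ G π = (⨅ τ : OneStage L J, ⨆ σ : OneStage K I, recval σ τ) := by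
  have hd : 0 < 1 - θ 0 := by linarith
  have hs : Summable θ := hθ1.summable
  have h0' : ∀ m, 0 ≤ θplus m := fun m => by rw [hθplus]; exact div_nonneg (hθ0 _) hd.le
  have hs' : Summable θplus := by
    have : θplus = fun m => θ (m + 1) / (1 - θ 0) := funext hθplus
    rw [this]
    exact ((summable_nat_add_iff 1).2 hs).div_const _
  have hθ' : ∀ m, θ (m + 1) = (1 - θ 0) * θplus m := fun m => by
    rw [hθplus]; field_simp
  have hrec : ∀ σ τ, recval σ τ =
      θ 0 * (∑ k, ∑ l, ∑ i, ∑ j, π (k, l) * σ.1 k i * τ.1 l j * G k l i j) +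
      (1 - θ 0) * ∑ i, ∑ j, vPlus θplus G (mu π σ τ i j) := by
    intro σ τ
    rw [hrecval, hGexp]
    congr 2
    refine Finset.sum_congr rfl fun i _ => Finset.sum_congr rfl fun j _ => ?_
    have hnn : ∀ k l, 0 ≤ π (k, l) * σ.1 k i * τ.1 l j := fun k l =>
      mul_nonneg (mul_nonneg (hπ.1 _) ((σ.2 k).1 i)) ((τ.2 l).1 j)
    split_ifs with hp
    · rw [← vPlus_smul _ _ _ _ hp.le]
      congr 1
      funext kl
      rw [hπij, mu]
      field_simp
    · have hP : Pij σ τ i j = 0 := by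
        refine le_antisymm (not_lt.1 hp) ?_
        rw [hPij]
        exact Finset.sum_nonneg fun k _ => Finset.sum_nonneg fun l _ => hnn k l
      rw [hPij] at hP
      have : mu π σ τ i j = fun kl => 0 * mu π σ τ i j kl := by
        funext ⟨k, l⟩
        have h1 := (Finset.sum_eq_zero_iff_of_nonneg fun k _ =>
          Finset.sum_nonneg fun l _ => hnn k l).1 hP k (Finset.mem_univ _)
        have h2 := (Finset.sum_eq_zero_iff_of_nonneg fun l _ => hnn k l).1 h1 l (Finset.mem_univ _)
        rw [zero_mul]; exact h2
      rw [this, vPlus_smul _ _ _ _ le_rfl, zero_mul]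
  choose os ot hos hot using fun μ => exists_opt θplus h0' hs' G μ
  have hR := pay_rec θ hθ0 hs θplus (1 - θ 0) hθ' h0' hs' G π
  have hbd : ∀ σ τ, |recval σ τ| ≤ ∑ k, ∑ l, |π (k, l)| * ∑' m, θ m * Cst G := by
    intro σ τ
    have : recval σ τ = pay θ G π (consS σ fun i j => os (mu π σ τ i j))
        (consS τ fun i j => ot (mu π σ τ i j)) := by
      rw [hR, hrec]
      simp only [head_cons, tail_cons]
      congr 2
      refine Finset.sum_congr rfl fun i _ => Finset.sum_congr rfl fun j _ => ?_
      exact le_antisymm (hot _ _) (hos _ _)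
    rw [this]
    exact pay_bound θ hθ0 hs G π _ _
  obtain ⟨S, T, hS, hT⟩ := exists_opt θ hθ0 hs G π
  have key := saddle_value recval _ hbd (headS S) (headS T) (vPlus θ G π) ?_ ?_
  · exact ⟨key.1.symm, key.2.symm⟩
  · intro σ
    refine le_trans ?_ (hS (consS σ fun i j => os (mu π σ (headS T) i j)))
    rw [hR, hrec]
    simp only [head_cons, tail_cons]
    gcongr
    exact hot _ _
  · intro τ
    refine (hT (consS τ fun i j => ot (mu π (headS S) τ i j))).trans ?_
    rw [hR, hrec]
    simp only [head_cons, tail_cons]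
    gcongr
    exact hos _ _
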